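/- Let K be a field of characteristic zero, R = K[x_0,…,x_N], S = K[y_0,…,y_N], and let I = {I_n}_{n≥1} be a differentially closed graded filtration of proper homogeneous ideals of R with α_n = α(I_n), β_s = soc(S/L^s(I)), such that {α_n − n} is nondecreasing and not bounded above. Set α̂ = lim_{n→∞} α_n/n and β̂ = lim_{s→∞} β_s/s. Then for all s, n ≥ 1: soc(S/L^s(I)) ≤ s·α̂/(α̂ − 1) and n·β̂/(β̂ − 1) ≤ α(I_n). -/

import Mathlib

open MvPolynomial Filter Topology
open scoped ENNReal

/-- The differential operator `D_a = (1/a!) ∂^a/∂x^a`, characterized on monomials by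
`D_a (x^b) = C(b,a) · x^(b-a)` when `b ≥ a` componentwise (and `0` otherwise), where
`C(b,a) = ∏ᵢ (bᵢ choose aᵢ)`; note that the binomial coefficient vanishes when
`b ≥ a` fails, so no case split is needed. -/
noncomputable def Dop {m : ℕ} {K : Type*} [CommSemiring K] (a : Fin m →₀ ℕ)
    (f : MvPolynomial (Fin m) K) : MvPolynomial (Fin m) K :=
  ∑ b ∈ f.support,
    MvPolynomial.monomial (b - a) ((((∏ i, Nat.choose (b i) (a i)) : ℕ) : K) * f.coeff b)

/-- A filtration `{I n}` of ideals of `K[x_0,…,x_{m-1}]` is differentially closed if for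
every `n ≥ 1`, every operator `D_a` with `|a| ≤ n - 1`, and every `F ∈ I n`, we have
`D_a F ∈ I (n - |a|)`. -/
def DiffClosed {m : ℕ} {K : Type*} [CommSemiring K]
    (I : ℕ → Ideal (MvPolynomial (Fin m) K)) : Prop :=
  ∀ n, 1 ≤ n → ∀ a : Fin m →₀ ℕ, (a.sum fun _ k => k) ≤ n - 1 →
    ∀ F ∈ I n, Dop a F ∈ I (n - a.sum fun _ k => k)

/-- The iterated partial derivative `∂^a/∂y^a`. -/
noncomputable def multiPderiv {m : ℕ} {K : Type*} [CommSemiring K] (a : Fin m →₀ ℕ)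
    (g : MvPolynomial (Fin m) K) : MvPolynomial (Fin m) K :=
  (List.finRange m).foldl (fun h i => (fun q => MvPolynomial.pderiv i q)^[a i] h) g

/-- The action `F ∘ g` of `R = K[x]` on `S = K[y]` by partial differentiation: the
monomial `x^a` acts on `g` as `∂^a g/∂y^a`, extended linearly. -/
noncomputable def diffAction {m : ℕ} {K : Type*} [CommSemiring K]
    (F g : MvPolynomial (Fin m) K) : MvPolynomial (Fin m) K :=
  ∑ a ∈ F.support, F.coeff a • multiPderiv a g

/-- The perpendicular space `((I)_d)^⊥ = {g ∈ S_d | F ∘ g = 0 for all F ∈ I_d}` of the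
degree-`d` part of an ideal `I ⊆ R`, inside `S_d`, for the differentiation action. -/
def perpSet {m : ℕ} {K : Type*} [CommSemiring K]
    (I : Ideal (MvPolynomial (Fin m) K)) (d : ℕ) : Set (MvPolynomial (Fin m) K) :=
  {g | g ∈ MvPolynomial.homogeneousSubmodule (Fin m) K d ∧
       ∀ F ∈ I, F ∈ MvPolynomial.homogeneousSubmodule (Fin m) K d → diffAction F g = 0}

/-- `L^s(I) = ⊕_{d ≥ s+1} ((I_{d-s})_d)^⊥ ⊆ S`, the (internal direct) sum of the
perpendicular spaces, realized as the subspace of `S` spanned by them. -/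
noncomputable def Lpow {m : ℕ} {K : Type*} [CommSemiring K]
    (I : ℕ → Ideal (MvPolynomial (Fin m) K)) (s : ℕ) :
    Submodule K (MvPolynomial (Fin m) K) :=
  Submodule.span K (⋃ d ∈ Set.Ici (s + 1), perpSet (I (d - s)) d)

/-- An ideal of a polynomial ring is homogeneous when it contains all homogeneous
components of its elements. -/
def IsHomogeneousIdeal {m : ℕ} {K : Type*} [CommSemiring K]
    (I : Ideal (MvPolynomial (Fin m) K)) : Prop :=
  ∀ f ∈ I, ∀ d : ℕ, MvPolynomial.homogeneousComponent d f ∈ I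

/-- The initial degree `α(I) = min {deg f | 0 ≠ f ∈ I}` of an ideal. -/
noncomputable def initialDegree {m : ℕ} {K : Type*} [CommSemiring K]
    (I : Ideal (MvPolynomial (Fin m) K)) : ℕ :=
  sInf {d : ℕ | ∃ f ∈ I, f ≠ 0 ∧ f.totalDegree = d}

/-- The socle degree (end) of `S/L`: the largest degree `d` with `(S/L)_d ≠ 0`,
i.e. the largest `d` such that `S_d ⊄ L`. -/
noncomputable def socLE {m : ℕ} {K : Type*} [CommSemiring K]
    (L : Submodule K (MvPolynomial (Fin m) K)) : ℕ :=
  sSup {d : ℕ | ¬ MvPolynomial.homogeneousSubmodule (Fin m) K d ≤ L}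

/-!
The constant term of `F ∘ g` is the pairing `∑ a! · F_a · g_a`, which is nondegenerate in each
degree in characteristic zero and makes different degrees orthogonal. Hence, for `d > s`, `S_d` is
contained in `L^s(I)` exactly when `I_{d-s}` has no nonzero form of degree `d`, i.e. when
`d < α(I_{d-s})`. So `α_n ≤ s + n` implies `s + n ≤ β_s`, and conversely `α_n ≤ s + n` whenever
`β_s = s + n` with `n ≥ 1`.

Since `I_n^k ⊆ I_{kn}`, we have `α_{kn} ≤ k α_n`, hence `α̂ n ≤ α_n`. For `β_s = s + n` this gives
`α̂ n ≤ s + n`, which rearranges to the first bound. For `α_n = s + n` it gives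
`k (s + n) ≤ β_{ks}` for all `k`, hence `s + n ≤ β̂ s`, which rearranges to the second.
-/

/-! ### The apolar pairing -/

section ApolarPairing

variable {σ K : Type*} [CommSemiring K]

lemma coeff_iterate_pderiv (i : σ) (n : ℕ) (c : σ →₀ ℕ) (g : MvPolynomial σ K) :
    coeff c ((pderiv i)^[n] g) =
      (c i + 1).ascFactorial n * coeff (c + Finsupp.single i n) g := by
  induction n generalizing g with
  | zero => simp
  | succ n ih =>
    rw [Function.iterate_succ_apply, ih, coeff_pderiv, Nat.ascFactorial_succ, add_assoc,
      ← Finsupp.single_add, Finsupp.add_apply, Finsupp.single_eq_same]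
    push_cast
    ring

lemma coeff_foldl_iterate_pderiv {l : List σ} (hl : l.Nodup) (a c : σ →₀ ℕ)
    (g : MvPolynomial σ K) :
    coeff c (l.foldl (fun h i => (fun q => pderiv i q)^[a i] h) g) =
      ((l.map fun i => (c i + 1).ascFactorial (a i)).prod : ℕ) *
        coeff (c + (l.map fun i => Finsupp.single i (a i)).sum) g := by
  classical
  induction l generalizing g with
  | nil => simp
  | cons i l ih =>
    obtain ⟨hi, hl⟩ := List.nodup_cons.1 hl
    have h_zero : (l.map fun j => Finsupp.single j (a j)).sum i = 0 := by
      rw [← Finsupp.applyAddHom_apply, map_list_sum, List.map_map]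
      refine List.sum_eq_zero fun x hx => ?_
      obtain ⟨j, hj, rfl⟩ := List.mem_map.1 hx
      exact Finsupp.single_eq_of_ne (ne_of_mem_of_not_mem hj hi).symm
    rw [List.foldl_cons, ih hl, coeff_iterate_pderiv, Finsupp.add_apply, h_zero, add_zero,
      List.map_cons, List.prod_cons, List.map_cons, List.sum_cons, add_assoc, ← mul_assoc,
      add_comm (List.sum _) (Finsupp.single _ _), Nat.cast_mul, mul_comm (Nat.cast (List.prod _))]

variable {m : ℕ}

lemma coeff_multiPderiv (a c : Fin m →₀ ℕ) (g : MvPolynomial (Fin m) K) :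
    coeff c (multiPderiv a g) =
      (∏ i, (c i + 1).ascFactorial (a i) : ℕ) * coeff (c + a) g := by
  rw [multiPderiv, coeff_foldl_iterate_pderiv (List.nodup_finRange m), ← List.ofFn_eq_map,
    ← List.ofFn_eq_map, List.prod_ofFn, List.sum_ofFn, Finsupp.univ_sum_single]

/-- The apolar pairing `⟨F, g⟩ = ∑ a! · F_a · g_a` as a linear functional of `g`; it is the
constant term of `F ∘ g`, and unlike `F ∘ g` it does not mix distinct monomials. -/
noncomputable def apolarPairing (F : MvPolynomial (Fin m) K) : MvPolynomial (Fin m) K →ₗ[K] K :=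
  ∑ a ∈ F.support, (F.coeff a * (∏ i, (a i).factorial : ℕ)) • lcoeff K a

lemma apolarPairing_apply (F g : MvPolynomial (Fin m) K) :
    apolarPairing F g =
      ∑ a ∈ F.support, F.coeff a * (∏ i, (a i).factorial : ℕ) * g.coeff a := by
  simp [apolarPairing]

lemma coeff_zero_diffAction (F g : MvPolynomial (Fin m) K) :
    coeff 0 (diffAction F g) = apolarPairing F g := by
  simp [diffAction, coeff_sum, coeff_multiPderiv, apolarPairing_apply, Nat.one_ascFactorial,
    mul_assoc]

lemma apolarPairing_monomial (F : MvPolynomial (Fin m) K) (a : Fin m →₀ ℕ) (r : K) :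
    apolarPairing F (monomial a r) = F.coeff a * (∏ i, (a i).factorial : ℕ) * r := by
  classical
  rw [apolarPairing_apply, Finset.sum_eq_single a]
  · rw [coeff_monomial, if_pos rfl]
  · intro b _ hb
    rw [coeff_monomial, if_neg hb.symm, mul_zero]
  · intro ha
    rw [notMem_support_iff.1 ha, zero_mul, zero_mul]

lemma apolarPairing_eq_zero_of_ne {F g : MvPolynomial (Fin m) K} {d e : ℕ}
    (hF : F.IsHomogeneous d) (hg : g.IsHomogeneous e) (hde : d ≠ e) : apolarPairing F g = 0 := by
  rw [apolarPairing_apply]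
  refine Finset.sum_eq_zero fun a ha => ?_
  have hdeg : a.degree = d := by
    by_contra h
    exact mem_support_iff.1 ha (hF.coeff_eq_zero h)
  rw [hg.coeff_eq_zero (hdeg.trans_ne hde), mul_zero]

lemma exists_isHomogeneous_apolarPairing_ne_zero [NoZeroDivisors K] [CharZero K]
    {F : MvPolynomial (Fin m) K} {d : ℕ} (hF : F.IsHomogeneous d) (hF0 : F ≠ 0) :
    ∃ g : MvPolynomial (Fin m) K, g.IsHomogeneous d ∧ apolarPairing F g ≠ 0 := by
  obtain ⟨a, ha⟩ := exists_coeff_ne_zero hF0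
  have hdeg : a.degree = d := by
    by_contra h
    exact ha (hF.coeff_eq_zero h)
  refine ⟨monomial a 1, isHomogeneous_monomial 1 hdeg, ?_⟩
  rw [apolarPairing_monomial, mul_one]
  exact mul_ne_zero ha (Nat.cast_ne_zero.2
    (Finset.prod_ne_zero_iff.2 fun i _ => Nat.factorial_ne_zero (a i)))

end ApolarPairing

/-! ### Initial degrees -/

section InitialDegree

variable {m : ℕ} {K : Type*} [CommSemiring K]

lemma initialDegree_le_totalDegree {J : Ideal (MvPolynomial (Fin m) K)}
    {f : MvPolynomial (Fin m) K} (hf : f ∈ J) (hf0 : f ≠ 0) : initialDegree J ≤ f.totalDegree :=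
  Nat.sInf_le ⟨f, hf, hf0, rfl⟩

lemma exists_totalDegree_eq_initialDegree {J : Ideal (MvPolynomial (Fin m) K)} (hJ : J ≠ ⊥) :
    ∃ f ∈ J, f ≠ 0 ∧ f.totalDegree = initialDegree J := by
  obtain ⟨f, hf, hf0⟩ := Submodule.exists_mem_ne_zero_of_ne_bot hJ
  exact Nat.sInf_mem (s := {d | ∃ f ∈ J, f ≠ 0 ∧ f.totalDegree = d}) ⟨_, f, hf, hf0, rfl⟩

lemma homogeneousComponent_totalDegree_ne_zero {σ : Type*} {f : MvPolynomial σ K} (hf : f ≠ 0) :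
    homogeneousComponent f.totalDegree f ≠ 0 := by
  obtain ⟨a, ha, ha_deg⟩ :=
    Finset.exists_mem_eq_sup f.support (support_nonempty.2 hf) fun s => s.sum fun _ e => e
  refine ne_zero_iff.2 ⟨a, ?_⟩
  rw [coeff_homogeneousComponent, if_pos (show a.degree = f.totalDegree from ha_deg.symm)]
  exact mem_support_iff.1 ha

lemma exists_isHomogeneous_of_initialDegree_le [NoZeroDivisors K] [NeZero m]
    {J : Ideal (MvPolynomial (Fin m) K)} (hJ : J ≠ ⊥) (hhom : IsHomogeneousIdeal J) {d : ℕ}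
    (hd : initialDegree J ≤ d) : ∃ F ∈ J, F ≠ 0 ∧ F.IsHomogeneous d := by
  obtain ⟨f, hf, hf0, hfd⟩ := exists_totalDegree_eq_initialDegree hJ
  obtain ⟨a, ha⟩ := exists_coeff_ne_zero hf0
  have : Nontrivial K := nontrivial_of_ne _ _ ha
  refine ⟨X 0 ^ (d - f.totalDegree) * homogeneousComponent f.totalDegree f,
    J.mul_mem_left _ (hhom f hf _),
    mul_ne_zero (pow_ne_zero _ (X_ne_zero _)) (homogeneousComponent_totalDegree_ne_zero hf0), ?_⟩
  have h := (isHomogeneous_X_pow (R := K) (0 : Fin m) (d - f.totalDegree)).mul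
    (homogeneousComponent_isHomogeneous f.totalDegree f)
  rwa [Nat.sub_add_cancel (hfd.trans_le hd)] at h

lemma initialDegree_le_add_of_mul_le [NoZeroDivisors K] {J₁ J₂ J : Ideal (MvPolynomial (Fin m) K)}
    (h₁ : J₁ ≠ ⊥) (h₂ : J₂ ≠ ⊥) (h : J₁ * J₂ ≤ J) :
    initialDegree J ≤ initialDegree J₁ + initialDegree J₂ := by
  obtain ⟨f, hf, hf0, hfd⟩ := exists_totalDegree_eq_initialDegree h₁
  obtain ⟨g, hg, hg0, hgd⟩ := exists_totalDegree_eq_initialDegree h₂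
  calc initialDegree J ≤ (f * g).totalDegree :=
        initialDegree_le_totalDegree (h (Ideal.mul_mem_mul hf hg)) (mul_ne_zero hf0 hg0)
    _ ≤ f.totalDegree + g.totalDegree := totalDegree_mul f g
    _ = initialDegree J₁ + initialDegree J₂ := by rw [hfd, hgd]

lemma initialDegree_mul_le [NoZeroDivisors K] {I : ℕ → Ideal (MvPolynomial (Fin m) K)}
    (hgr : ∀ m n, 1 ≤ m → 1 ≤ n → I m * I n ≤ I (m + n)) (hne : ∀ n, 1 ≤ n → I n ≠ ⊥)
    {k n : ℕ} (hk : 1 ≤ k) (hn : 1 ≤ n) : initialDegree (I (k * n)) ≤ k * initialDegree (I n) := by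
  induction k, hk using Nat.le_induction with
  | base => rw [one_mul, one_mul]
  | succ k hk ih =>
    have hkn : 1 ≤ k * n := Nat.mul_pos hk hn
    calc initialDegree (I ((k + 1) * n)) ≤ initialDegree (I (k * n)) + initialDegree (I n) :=
          initialDegree_le_add_of_mul_le (hne _ hkn) (hne n hn)
            ((hgr _ n hkn hn).trans_eq (by rw [add_one_mul]))
      _ ≤ k * initialDegree (I n) + initialDegree (I n) := by gcongr
      _ = (k + 1) * initialDegree (I n) := (add_one_mul _ _).symm

-- If `α(I n) ≤ n`, then `α(I (k * n)) - k * n ≤ 0` for all `k`, so `α(I n) - n` cannot diverge.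
lemma lt_initialDegree [NoZeroDivisors K] {I : ℕ → Ideal (MvPolynomial (Fin m) K)}
    (hgr : ∀ m n, 1 ≤ m → 1 ≤ n → I m * I n ≤ I (m + n)) (hne : ∀ n, 1 ≤ n → I n ≠ ⊥)
    (htop : Tendsto (fun n : ℕ => (initialDegree (I n) : ℤ) - n) atTop atTop)
    {n : ℕ} (hn : 1 ≤ n) : n < initialDegree (I n) := by
  have h_mul : Tendsto (fun k : ℕ => k * n) atTop atTop := tendsto_id.atTop_mul_const' hn
  obtain ⟨k, hk_pos, hk⟩ :=
    (((htop.comp h_mul).eventually_gt_atTop 0).and (eventually_ge_atTop 1)).exists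
  have hlt : k * n < initialDegree (I (k * n)) := by
    simpa only [Function.comp_apply, sub_pos, Nat.cast_lt] using hk_pos
  exact lt_of_mul_lt_mul_left' (hlt.trans_le (initialDegree_mul_le hgr hne hk hn))

end InitialDegree

/-! ### Duality between initial degrees and socle degrees -/

section Duality

variable {m : ℕ} {K : Type*} [CommSemiring K] {I : ℕ → Ideal (MvPolynomial (Fin m) K)}

lemma Lpow_le_ker_apolarPairing {F : MvPolynomial (Fin m) K} {s d : ℕ} (hF : F ∈ I (d - s))
    (hd : F.IsHomogeneous d) : Lpow I s ≤ LinearMap.ker (apolarPairing F) := by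
  refine Submodule.span_le.2 (Set.iUnion₂_subset fun e _ g ⟨hg, hg_perp⟩ => ?_)
  rw [SetLike.mem_coe, LinearMap.mem_ker]
  obtain rfl | hde := eq_or_ne d e
  · rw [← coeff_zero_diffAction, hg_perp F hF hd, coeff_zero]
  · exact apolarPairing_eq_zero_of_ne hd hg hde

lemma perpSet_eq_of_lt_initialDegree {J : Ideal (MvPolynomial (Fin m) K)} {d : ℕ}
    (hd : d < initialDegree J) : perpSet J d = homogeneousSubmodule (Fin m) K d := by
  refine Set.Subset.antisymm (fun g hg => hg.1) fun g hg => ⟨hg, fun F hF hFd => ?_⟩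
  have hF0 : F = 0 := by
    by_contra hF0
    have h := initialDegree_le_totalDegree hF hF0
    rw [IsHomogeneous.totalDegree hFd hF0] at h
    exact hd.not_ge h
  simp [hF0, diffAction]

theorem homogeneousSubmodule_le_Lpow {s n : ℕ} (hn : 1 ≤ n) (h : s + n < initialDegree (I n)) :
    homogeneousSubmodule (Fin m) K (s + n) ≤ Lpow I s := by
  refine fun g hg => Submodule.subset_span
    (Set.mem_iUnion₂_of_mem (Set.mem_Ici.2 (Nat.add_le_add_left hn s)) ?_)
  rwa [Nat.add_sub_cancel_left, perpSet_eq_of_lt_initialDegree h]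

theorem not_homogeneousSubmodule_le_Lpow [NoZeroDivisors K] [CharZero K] [NeZero m] {s n : ℕ}
    (hne : I n ≠ ⊥) (hhom : IsHomogeneousIdeal (I n)) (h : initialDegree (I n) ≤ s + n) :
    ¬ homogeneousSubmodule (Fin m) K (s + n) ≤ Lpow I s := by
  intro hle
  obtain ⟨F, hF, hF0, hFd⟩ := exists_isHomogeneous_of_initialDegree_le hne hhom h
  obtain ⟨g, hg, hFg⟩ := exists_isHomogeneous_apolarPairing_ne_zero hFd hF0
  exact hFg (Lpow_le_ker_apolarPairing (by rwa [Nat.add_sub_cancel_left]) hFd (hle hg))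

lemma bddAbove_not_homogeneousSubmodule_le_Lpow
    (htop : Tendsto (fun n : ℕ => (initialDegree (I n) : ℤ) - n) atTop atTop) (s : ℕ) :
    BddAbove {d | ¬ homogeneousSubmodule (Fin m) K d ≤ Lpow I s} := by
  obtain ⟨M, hM⟩ := eventually_atTop.1 (htop.eventually_gt_atTop (s : ℤ))
  refine ⟨s + M, fun d hd => ?_⟩
  by_contra! hlt
  obtain ⟨n, rfl⟩ := Nat.exists_eq_add_of_le ((Nat.le_add_right s M).trans hlt.le)
  have hMn := hM n (by lia)
  exact hd (homogeneousSubmodule_le_Lpow (by lia) (by lia))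

lemma le_socLE_of_initialDegree_le [NoZeroDivisors K] [CharZero K] [NeZero m]
    (htop : Tendsto (fun n : ℕ => (initialDegree (I n) : ℤ) - n) atTop atTop) {s n : ℕ}
    (hne : I n ≠ ⊥) (hhom : IsHomogeneousIdeal (I n)) (h : initialDegree (I n) ≤ s + n) :
    s + n ≤ socLE (Lpow I s) :=
  le_csSup (bddAbove_not_homogeneousSubmodule_le_Lpow htop s)
    (not_homogeneousSubmodule_le_Lpow hne hhom h)

lemma initialDegree_le_of_socLE_eq
    (htop : Tendsto (fun n : ℕ => (initialDegree (I n) : ℤ) - n) atTop atTop) {s n : ℕ}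
    (hn : 1 ≤ n) (h : socLE (Lpow I s) = s + n) : initialDegree (I n) ≤ s + n := by
  have h_nonempty : {d | ¬ homogeneousSubmodule (Fin m) K d ≤ Lpow I s}.Nonempty := by
    by_contra h_empty
    rw [socLE, Set.not_nonempty_iff_eq_empty.1 h_empty, csSup_empty, bot_eq_zero] at h
    lia
  have h_mem : ¬ homogeneousSubmodule (Fin m) K (s + n) ≤ Lpow I s :=
    h ▸ Nat.sSup_mem h_nonempty (bddAbove_not_homogeneousSubmodule_le_Lpow htop s)
  by_contra! hlt
  exact h_mem (homogeneousSubmodule_le_Lpow hn hlt)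

end Duality

/-! ### Limits of ratios and conjugate exponents -/

lemma tendsto_atTop_of_le_succ {α : Type*} [Preorder α] {u : ℕ → α} {k : ℕ}
    (hu : ∀ n, k ≤ n → u n ≤ u (n + 1)) (hunb : ∀ C, ∃ n, k ≤ n ∧ C ≤ u n) :
    Tendsto u atTop atTop := by
  rw [← tendsto_add_atTop_iff_nat k]
  refine tendsto_atTop_atTop_of_monotone (monotone_nat_of_le_succ fun n => ?_) fun C => ?_
  · rw [Nat.add_right_comm]
    exact hu (n + k) (Nat.le_add_left k n)
  · obtain ⟨n, hn, hC⟩ := hunb C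
    exact ⟨n - k, by rwa [Nat.sub_add_cancel hn]⟩

section Ratio

variable {u : ℕ → ℝ≥0∞} {n : ℕ} {c L : ℝ≥0∞}

lemma tendsto_mul_div (hn : 1 ≤ n) (hL : Tendsto (fun k => u k / k) atTop (𝓝 L)) :
    Tendsto (fun k => u (k * n) / k) atTop (𝓝 (L * n)) := by
  have hn0 : (n : ℝ≥0∞) ≠ 0 := Nat.cast_ne_zero.2 (Nat.one_le_iff_ne_zero.1 hn)
  have h := ENNReal.Tendsto.mul_const (hL.comp (tendsto_id.atTop_mul_const' hn))
    (.inr (ENNReal.natCast_ne_top n))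
  refine h.congr fun k => ?_
  rw [Function.comp_apply, id, Nat.cast_mul, ← ENNReal.mul_div_right_comm,
    ENNReal.mul_div_mul_right _ _ hn0 (ENNReal.natCast_ne_top n)]

lemma mul_le_of_tendsto_div (hn : 1 ≤ n) (hL : Tendsto (fun k => u k / k) atTop (𝓝 L))
    (hu : ∀ k : ℕ, 1 ≤ k → u (k * n) ≤ k * c) : L * n ≤ c := by
  refine le_of_tendsto (tendsto_mul_div hn hL) ?_
  filter_upwards [eventually_ge_atTop 1] with k hk
  exact ENNReal.div_le_of_le_mul' (hu k hk)

lemma le_mul_of_tendsto_div (hn : 1 ≤ n) (hL : Tendsto (fun k => u k / k) atTop (𝓝 L))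
    (hu : ∀ k : ℕ, 1 ≤ k → k * c ≤ u (k * n)) : c ≤ L * n := by
  refine ge_of_tendsto (tendsto_mul_div hn hL) ?_
  filter_upwards [eventually_ge_atTop 1] with k hk
  have hk0 : (k : ℝ≥0∞) ≠ 0 := Nat.cast_ne_zero.2 (Nat.one_le_iff_ne_zero.1 hk)
  rw [ENNReal.le_div_iff_mul_le (.inl hk0) (.inl (ENNReal.natCast_ne_top k)), mul_comm]
  exact hu k hk

end Ratio

section ConjugateExponent

variable {A s n : ℝ≥0∞}

lemma div_sub_one_eq_one_add_inv (h1 : 1 ≤ A) (hA : A ≠ ⊤) : A / (A - 1) = 1 + (A - 1)⁻¹ := by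
  obtain rfl | h1 := h1.eq_or_lt
  · simp
  · nth_rw 1 [← tsub_add_cancel_of_le h1.le]
    rw [ENNReal.add_div, ENNReal.div_self (tsub_pos_of_lt h1).ne' (ENNReal.sub_ne_top hA), one_div]

lemma add_le_mul_one_add_inv (hs0 : s ≠ 0) (hs : s ≠ ⊤) (hn : n ≠ ⊤) (h : A * n ≤ s + n) :
    s + n ≤ s * (1 + (A - 1)⁻¹) := by
  have h_sub : n * (A - 1) ≤ s := by
    rw [mul_comm, ENNReal.sub_mul fun _ _ => hn, one_mul]
    exact tsub_le_iff_right.2 h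
  rw [mul_add, mul_one, ← div_eq_mul_inv]
  gcongr
  exact (ENNReal.le_div_iff_mul_le (.inr hs0) (.inr hs)).2 h_sub

lemma mul_one_add_inv_le_add (hs : s ≠ ⊤) (h : s + n ≤ A * s) :
    n * (1 + (A - 1)⁻¹) ≤ s + n := by
  have h_sub : n ≤ s * (A - 1) := by
    rw [mul_comm, ENNReal.sub_mul fun _ _ => hs, one_mul]
    exact ENNReal.le_sub_of_add_le_left hs h
  rw [mul_add, mul_one, ← div_eq_mul_inv, add_comm]
  gcongr
  exact ENNReal.div_le_of_le_mul h_sub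

end ConjugateExponent

/-! ### The bounds -/

section Bounds

variable {m : ℕ} {K : Type*} [CommSemiring K] [NoZeroDivisors K]
  {I : ℕ → Ideal (MvPolynomial (Fin m) K)}

theorem socLE_Lpow_le_mul_div (hgr : ∀ m n, 1 ≤ m → 1 ≤ n → I m * I n ≤ I (m + n))
    (hne : ∀ n, 1 ≤ n → I n ≠ ⊥)
    (htop : Tendsto (fun n : ℕ => (initialDegree (I n) : ℤ) - n) atTop atTop) {A : ℝ≥0∞}
    (hA : Tendsto (fun n : ℕ => (initialDegree (I n) : ℝ≥0∞) / (n : ℝ≥0∞)) atTop (𝓝 A))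
    {s : ℕ} (hs : 1 ≤ s) : (socLE (Lpow I s) : ℝ≥0∞) ≤ s * (A / (A - 1)) := by
  have hA_le : ∀ n : ℕ, 1 ≤ n → A * n ≤ initialDegree (I n) := fun n hn =>
    mul_le_of_tendsto_div hn hA fun k hk => mod_cast initialDegree_mul_le hgr hne hk hn
  have hA_top : A ≠ ⊤ := by
    have h := (hA_le 1 le_rfl).trans_lt (ENNReal.natCast_lt_top _)
    rw [Nat.cast_one, mul_one] at h
    exact h.ne
  have hA_one : 1 ≤ A := by
    have h : ∀ k : ℕ, 1 ≤ k → (k : ℝ≥0∞) * 1 ≤ initialDegree (I (k * 1)) := fun k hk => by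
      rw [mul_one, mul_one]
      exact mod_cast (lt_initialDegree hgr hne htop hk).le
    simpa only [Nat.cast_one, mul_one] using le_mul_of_tendsto_div le_rfl hA h
  rw [div_sub_one_eq_one_add_inv hA_one hA_top]
  obtain hle | hlt := le_or_gt (socLE (Lpow I s)) s
  · calc (socLE (Lpow I s) : ℝ≥0∞) ≤ s := mod_cast hle
      _ ≤ s * (1 + (A - 1)⁻¹) := le_mul_of_one_le_right' le_self_add
  · obtain ⟨n, hn⟩ := Nat.exists_eq_add_of_le hlt.le
    have hn1 : 1 ≤ n := by lia
    have h_le : A * n ≤ s + n := (hA_le n hn1).trans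
      (mod_cast initialDegree_le_of_socLE_eq htop hn1 hn)
    rw [hn, Nat.cast_add]
    exact add_le_mul_one_add_inv (Nat.cast_ne_zero.2 (by lia)) (ENNReal.natCast_ne_top s)
      (ENNReal.natCast_ne_top n) h_le

theorem mul_le_initialDegree [CharZero K] [NeZero m]
    (hgr : ∀ m n, 1 ≤ m → 1 ≤ n → I m * I n ≤ I (m + n))
    (hhom : ∀ n, 1 ≤ n → IsHomogeneousIdeal (I n)) (hne : ∀ n, 1 ≤ n → I n ≠ ⊥)
    (htop : Tendsto (fun n : ℕ => (initialDegree (I n) : ℤ) - n) atTop atTop) {B : ℝ≥0∞}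
    (hB : Tendsto (fun s : ℕ => (socLE (Lpow I s) : ℝ≥0∞) / (s : ℝ≥0∞)) atTop (𝓝 B))
    {n : ℕ} (hn : 1 ≤ n) : (n : ℝ≥0∞) * (1 + (B - 1)⁻¹) ≤ initialDegree (I n) := by
  have hlt : n < initialDegree (I n) := lt_initialDegree hgr hne htop hn
  obtain ⟨s, hs⟩ : ∃ s, initialDegree (I n) = s + n := Nat.exists_eq_add_of_le' hlt.le
  have h_soc : ∀ k, 1 ≤ k → k * (s + n) ≤ socLE (Lpow I (k * s)) := fun k hk => by
    have hkn : 1 ≤ k * n := Nat.mul_pos hk hn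
    rw [mul_add]
    refine le_socLE_of_initialDegree_le htop (hne _ hkn) (hhom _ hkn) ?_
    rw [← mul_add, ← hs]
    exact initialDegree_mul_le hgr hne hk hn
  have hB_ge : (s + n : ℝ≥0∞) ≤ B * s :=
    le_mul_of_tendsto_div (by lia) hB fun k hk => mod_cast h_soc k hk
  rw [hs, Nat.cast_add]
  exact mul_one_add_inv_le_add (ENNReal.natCast_ne_top s) hB_ge

theorem statement_15_general [CharZero K] [NeZero m]
    (I : ℕ → Ideal (MvPolynomial (Fin m) K))
    (hgr : ∀ m n, 1 ≤ m → 1 ≤ n → I m * I n ≤ I (m + n))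
    (hhom : ∀ n, 1 ≤ n → IsHomogeneousIdeal (I n))
    (hne : ∀ n, 1 ≤ n → I n ≠ ⊥)
    (htop : Tendsto (fun n : ℕ => (initialDegree (I n) : ℤ) - n) atTop atTop)
    (A B : ℝ≥0∞)
    (hA : Tendsto (fun n : ℕ => (initialDegree (I n) : ℝ≥0∞) / (n : ℝ≥0∞)) atTop (𝓝 A))
    (hB : Tendsto (fun s : ℕ => (socLE (Lpow I s) : ℝ≥0∞) / (s : ℝ≥0∞)) atTop (𝓝 B)) :
    (∀ s : ℕ, 1 ≤ s → (socLE (Lpow I s) : ℝ≥0∞) ≤ (s : ℝ≥0∞) * (A / (A - 1))) ∧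
    (∀ n : ℕ, 1 ≤ n → (n : ℝ≥0∞) * (1 + (B - 1)⁻¹) ≤ (initialDegree (I n) : ℝ≥0∞)) :=
  ⟨fun _ hs => socLE_Lpow_le_mul_div hgr hne htop hA hs,
    fun _ hn => mul_le_initialDegree hgr hhom hne htop hB hn⟩

end Bounds

/-- (Corollary `boundingWaldschmidt`.)  In the setting of the
inverse-system duality theorem (differentially closed graded filtration of proper nonzero
homogeneous ideals with `{α_n - n}` nondecreasing and unbounded), with
`α̂ = lim α_n/n` and `β̂ = lim β_s/s` in `ℝ≥0∞`, one has for all `s, n ≥ 1` the bounds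
`soc(S/L^s(I)) ≤ s·α̂/(α̂ - 1)` and `n·β̂/(β̂ - 1) ≤ α(I_n)`; the factor `β̂/(β̂ - 1)`
is rendered as `1 + (β̂ - 1)⁻¹`, the form valid in `ℝ≥0∞` under the paper's conventions
(value `1` when `β̂ = ∞`). -/
theorem statement_15 {N : ℕ} {K : Type*} [Field K] [CharZero K]
    (I : ℕ → Ideal (MvPolynomial (Fin (N + 1)) K))
    (hfil : ∀ n, 1 ≤ n → I (n + 1) ≤ I n)
    (hgr : ∀ m n, 1 ≤ m → 1 ≤ n → I m * I n ≤ I (m + n))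
    (hhom : ∀ n, 1 ≤ n → IsHomogeneousIdeal (I n))
    (hproper : ∀ n, 1 ≤ n → I n ≠ ⊤)
    (hne : ∀ n, 1 ≤ n → I n ≠ ⊥)
    (hdc : DiffClosed I)
    (hmono : ∀ n, 1 ≤ n →
      (initialDegree (I n) : ℤ) - n ≤ (initialDegree (I (n + 1)) : ℤ) - (n + 1))
    (hunb : ∀ C : ℤ, ∃ n : ℕ, 1 ≤ n ∧ C < (initialDegree (I n) : ℤ) - n)
    (A B : ℝ≥0∞)
    (hA : Tendsto (fun n : ℕ => (initialDegree (I n) : ℝ≥0∞) / (n : ℝ≥0∞)) atTop (𝓝 A))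
    (hB : Tendsto (fun s : ℕ => (socLE (Lpow I s) : ℝ≥0∞) / (s : ℝ≥0∞)) atTop (𝓝 B)) :
    (∀ s : ℕ, 1 ≤ s → (socLE (Lpow I s) : ℝ≥0∞) ≤ (s : ℝ≥0∞) * (A / (A - 1))) ∧
    (∀ n : ℕ, 1 ≤ n → (n : ℝ≥0∞) * (1 + (B - 1)⁻¹) ≤ (initialDegree (I n) : ℝ≥0∞)) :=
  statement_15_general I hgr hhom hne (tendsto_atTop_of_le_succ (fun n hn => mod_cast hmono n hn)
    fun C => (hunb C).imp fun _ h => ⟨h.1, h.2.le⟩) A B hA hB
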